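/- For every natural number n ≥ 7, M_{[4]}(n) = p_{[4]}(n) − p_{[4]}(n−7) and M_{[5]}(n) = p_{[5]}(n) − p_{[5]}(n−7); moreover, for 0 ≤ n < 7, M_{[4]}(n) = p_{[4]}(n) and M_{[5]}(n) = p_{[5]}(n). -/

import Mathlib

/-- The product, with multiplicity, of the factorials of the elements of a multiset. -/
def factorialProd (A : Multiset ℕ) : ℕ := (A.map Nat.factorial).prod

/-- `MS S n`: the number of distinct multinomial coefficients with upper entry `n` and
lower entries in `S`. -/
noncomputable def MS (S : Set ℕ) (n : ℕ) : ℕ :=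
  Set.ncard {v : ℕ | ∃ P : Nat.Partition n, (∀ j ∈ P.parts, j ∈ S) ∧ factorialProd P.parts = v}

/-- `pS S n`: the number of partitions of `n` with all parts in `S`. -/
noncomputable def pS (S : Set ℕ) (n : ℕ) : ℕ :=
  Set.ncard {P : Nat.Partition n | ∀ j ∈ P.parts, j ∈ S}

/-!
Exchanging `1, 1, 1, 4` for `2, 2, 3` preserves both the sum and the product of factorials, since
`1 + 1 + 1 + 4 = 2 + 2 + 3` and `4! = 2! * 2! * 3!`, and it shortens the multiset. Repeating it,
every value of the product is attained on a multiset that does not contain `{1, 1, 1, 4}`.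

For parts at most `5`, the sum together with the exponents of `2`, `3` and `5` in the product gives
four independent linear functions of the five multiplicities. Their kernel is spanned by the
exchange vector `(3, -2, -1, 1, 0)`, so two multisets with the same sum and product differ by
repeated exchanges, and at most one of them avoids `{1, 1, 1, 4}`. Hence `M_S(n)` counts the
multisets avoiding `{1, 1, 1, 4}`, and removing `{1, 1, 1, 4}` from the others leaves an arbitrary
partition of `n - 7`.
-/

/-- The multisets of elements of `S` with sum `n`: for `0 ∉ S` these are the partitions of `n` with
all parts in `S`, freed from the type `Nat.Partition n` so that parts can be added and exchanged. -/
def multisetsWithSum (S : Set ℕ) (n : ℕ) : Set (Multiset ℕ) :=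
  {m | (∀ j ∈ m, j ∈ S) ∧ m.sum = n}

section

variable {S : Set ℕ} {n : ℕ} {T U m m' : Multiset ℕ}

lemma image_parts_eq_multisetsWithSum (hS : 0 ∉ S) :
    Nat.Partition.parts '' {P : Nat.Partition n | ∀ j ∈ P.parts, j ∈ S} =
      multisetsWithSum S n := by
  ext m
  constructor
  · rintro ⟨P, hP, rfl⟩
    exact ⟨hP, P.parts_sum⟩
  · rintro ⟨hm, hsum⟩
    have hpos {j : ℕ} (hj : j ∈ m) : 0 < j :=
      Nat.pos_of_ne_zero fun h => hS (h ▸ hm j hj)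
    exact ⟨⟨m, hpos, hsum⟩, hm, rfl⟩

lemma finite_multisetsWithSum (hS : 0 ∉ S) : (multisetsWithSum S n).Finite := by
  rw [← image_parts_eq_multisetsWithSum hS]
  exact (Set.toFinite _).image _

lemma pS_eq_ncard_multisetsWithSum (hS : 0 ∉ S) : pS S n = (multisetsWithSum S n).ncard := by
  rw [← image_parts_eq_multisetsWithSum hS,
    Set.ncard_image_of_injective _ fun _ _ => Nat.Partition.ext]
  rfl

lemma MS_eq_ncard_image_factorialProd (hS : 0 ∉ S) :
    MS S n = (factorialProd '' multisetsWithSum S n).ncard := by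
  rw [← image_parts_eq_multisetsWithSum hS, Set.image_image]
  rfl

lemma add_mem_multisetsWithSum_iff (hT : ∀ j ∈ T, j ∈ S) :
    T + m ∈ multisetsWithSum S n ↔ (∀ j ∈ m, j ∈ S) ∧ T.sum + m.sum = n := by
  simp only [multisetsWithSum, Set.mem_ofPred_eq, Multiset.mem_add, or_imp, forall_and,
    Multiset.sum_add, and_iff_right hT]

lemma ncard_multisetsWithSum_sep_le (hT : ∀ j ∈ T, j ∈ S) (k : ℕ) :
    {m ∈ multisetsWithSum S (T.sum + k) | T ≤ m}.ncard = (multisetsWithSum S k).ncard := by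
  rw [← Set.ncard_image_of_injective (multisetsWithSum S k) (add_right_injective T)]
  congr 1
  ext m
  constructor
  · rintro ⟨hm, hTm⟩
    obtain ⟨t, rfl⟩ := Multiset.le_iff_exists_add.1 hTm
    obtain ⟨ht, hsum⟩ := (add_mem_multisetsWithSum_iff hT).1 hm
    exact ⟨t, ⟨ht, Nat.add_left_cancel hsum⟩, rfl⟩
  · rintro ⟨t, ⟨ht, rfl⟩, rfl⟩
    exact ⟨(add_mem_multisetsWithSum_iff hT).2 ⟨ht, rfl⟩, Multiset.le_add_right T t⟩

lemma multisetsWithSum_sep_le_eq_empty (hn : n < T.sum) :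
    {m ∈ multisetsWithSum S n | T ≤ m} = ∅ := by
  refine Set.eq_empty_of_forall_notMem ?_
  rintro m ⟨⟨-, rfl⟩, hTm⟩
  obtain ⟨t, rfl⟩ := Multiset.le_iff_exists_add.1 hTm
  rw [Multiset.sum_add] at hn
  omega

lemma factorialProd_add (A B : Multiset ℕ) :
    factorialProd (A + B) = factorialProd A * factorialProd B := by
  simp only [factorialProd, Multiset.map_add, Multiset.prod_add]

/-- Replacing `T` by `U` inside a multiset of elements of `S` yields a multiset of elements of `S`
with the same sum and the same product of factorials, but with fewer parts; this last condition
makes repeated replacement terminate. -/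
structure IsShorteningExchange (S : Set ℕ) (T U : Multiset ℕ) : Prop where
  mem_left : ∀ j ∈ T, j ∈ S
  mem_right : ∀ j ∈ U, j ∈ S
  sum_eq : U.sum = T.sum
  factorialProd_eq : factorialProd U = factorialProd T
  card_lt : U.card < T.card

namespace IsShorteningExchange

lemma exists_not_le_factorialProd_eq {m : Multiset ℕ} (hTU : IsShorteningExchange S T U)
    (hm : m ∈ multisetsWithSum S n) :
    ∃ m' ∈ {m ∈ multisetsWithSum S n | ¬ T ≤ m}, factorialProd m' = factorialProd m := by
  by_cases hTm : T ≤ m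
  · obtain ⟨t, rfl⟩ := Multiset.le_iff_exists_add.1 hTm
    have hUt : U + t ∈ multisetsWithSum S n := by
      rwa [add_mem_multisetsWithSum_iff hTU.mem_right, hTU.sum_eq,
        ← add_mem_multisetsWithSum_iff hTU.mem_left]
    obtain ⟨m', hm', heq⟩ := hTU.exists_not_le_factorialProd_eq hUt
    exact ⟨m', hm', by rw [heq, factorialProd_add, factorialProd_add, hTU.factorialProd_eq]⟩
  · exact ⟨m, ⟨hm, hTm⟩, rfl⟩
termination_by m.card
decreasing_by simp only [Multiset.card_add, add_lt_add_iff_right, hTU.card_lt, *]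

lemma MS_add_ncard_eq_pS (hTU : IsShorteningExchange S T U) (hS : 0 ∉ S)
    (hinj : Set.InjOn factorialProd {m ∈ multisetsWithSum S n | ¬ T ≤ m}) :
    MS S n + {m ∈ multisetsWithSum S n | T ≤ m}.ncard = pS S n := by
  have himage : factorialProd '' multisetsWithSum S n =
      factorialProd '' {m ∈ multisetsWithSum S n | ¬ T ≤ m} := by
    refine Set.Subset.antisymm ?_ (Set.image_mono (Set.sep_subset _ _))
    rintro _ ⟨m, hm, rfl⟩
    exact hTU.exists_not_le_factorialProd_eq hm
  rw [MS_eq_ncard_image_factorialProd hS, pS_eq_ncard_multisetsWithSum hS, himage,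
    hinj.ncard_image, add_comm]
  exact Set.ncard_inter_add_ncard_sdiff_eq_ncard _ {m | T ≤ m} (finite_multisetsWithSum hS)

lemma MS_add_pS_eq_pS (hTU : IsShorteningExchange S T U) (hS : 0 ∉ S) (k : ℕ)
    (hinj : Set.InjOn factorialProd {m ∈ multisetsWithSum S (T.sum + k) | ¬ T ≤ m}) :
    MS S (T.sum + k) + pS S k = pS S (T.sum + k) := by
  rw [← hTU.MS_add_ncard_eq_pS hS hinj, ncard_multisetsWithSum_sep_le hTU.mem_left,
    pS_eq_ncard_multisetsWithSum hS]

lemma MS_eq_pS_of_lt_sum (hTU : IsShorteningExchange S T U) (hS : 0 ∉ S) (hn : n < T.sum)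
    (hinj : Set.InjOn factorialProd {m ∈ multisetsWithSum S n | ¬ T ≤ m}) :
    MS S n = pS S n := by
  rw [← hTU.MS_add_ncard_eq_pS hS hinj, multisetsWithSum_sep_le_eq_empty hn, Set.ncard_empty,
    add_zero]

end IsShorteningExchange

lemma factorization_factorialProd (s : Finset ℕ) (hm : ∀ j ∈ m, j ∈ s) (p : ℕ) :
    (factorialProd m).factorization p = ∑ j ∈ s, m.count j * j.factorial.factorization p := by
  have hprod : factorialProd m = ∏ j ∈ s, j.factorial ^ m.count j := by
    rw [factorialProd, Finset.prod_multiset_map_count]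
    refine Finset.prod_subset (fun j hj => hm j (Multiset.mem_toFinset.1 hj)) fun j _ hj => ?_
    rw [Multiset.count_eq_zero_of_notMem (mt Multiset.mem_toFinset.2 hj), pow_zero]
  rw [hprod, Nat.factorization_prod_apply fun j _ => pow_ne_zero _ j.factorial_ne_zero]
  simp only [Nat.factorization_pow, Finsupp.smul_apply, smul_eq_mul]

lemma factorization_factorial_of_lt_pow_three {p j : ℕ} (hp : p.Prime) (hj : j < p ^ 3) :
    j.factorial.factorization p = j / p + j / p ^ 2 := by
  rw [Nat.factorization_factorial hp (Nat.log_lt_of_lt_pow' three_ne_zero hj)]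
  simp [Finset.sum_Ico_succ_top]

lemma factorization_factorialProd_of_mem_Icc_one_five {p : ℕ} (hp : p.Prime)
    (hm : ∀ j ∈ m, j ∈ Finset.Icc 1 5) :
    (factorialProd m).factorization p =
      ∑ j ∈ Finset.Icc 1 5, m.count j * (j / p + j / p ^ 2) := by
  rw [factorization_factorialProd _ hm]
  refine Finset.sum_congr rfl fun j hj => ?_
  have hlt : j < p ^ 3 :=
    calc j ≤ 5 := (Finset.mem_Icc.1 hj).2
      _ < 2 ^ 3 := by norm_num
      _ ≤ p ^ 3 := Nat.pow_le_pow_left hp.two_le 3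
  rw [factorization_factorial_of_lt_pow_three hp hlt]

lemma sum_eq_of_mem_Icc_one_five (hm : ∀ j ∈ m, j ∈ Finset.Icc 1 5) :
    m.sum = m.count 1 + m.count 2 * 2 + m.count 3 * 3 + m.count 4 * 4 + m.count 5 * 5 := by
  rw [Finset.sum_multiset_count_of_subset m (Finset.Icc 1 5) fun j hj =>
    hm j (Multiset.mem_toFinset.1 hj)]
  simp [Finset.sum_Icc_succ_top]

lemma count_sub_count_of_factorialProd_eq (hm : ∀ j ∈ m, j ∈ Finset.Icc 1 5)
    (hm' : ∀ j ∈ m', j ∈ Finset.Icc 1 5) (hsum : m.sum = m'.sum)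
    (hprod : factorialProd m = factorialProd m') :
    (m.count 1 - m'.count 1 : ℤ) = 3 * (m.count 4 - m'.count 4) ∧
      (m.count 2 - m'.count 2 : ℤ) = -2 * (m.count 4 - m'.count 4) ∧
      (m.count 3 - m'.count 3 : ℤ) = -(m.count 4 - m'.count 4) ∧
      m.count 5 = m'.count 5 := by
  have valuation_eq {p : ℕ} (hp : p.Prime) :
      ∑ j ∈ Finset.Icc 1 5, m.count j * (j / p + j / p ^ 2) =
        ∑ j ∈ Finset.Icc 1 5, m'.count j * (j / p + j / p ^ 2) := by
    rw [← factorization_factorialProd_of_mem_Icc_one_five hp hm,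
      ← factorization_factorialProd_of_mem_Icc_one_five hp hm', hprod]
  have htwo : m.count 2 + m.count 3 + m.count 4 * 3 + m.count 5 * 3 =
      m'.count 2 + m'.count 3 + m'.count 4 * 3 + m'.count 5 * 3 := by
    simpa [Finset.sum_Icc_succ_top] using valuation_eq Nat.prime_two
  have hthree : m.count 3 + m.count 4 + m.count 5 = m'.count 3 + m'.count 4 + m'.count 5 := by
    simpa [Finset.sum_Icc_succ_top] using valuation_eq Nat.prime_three
  have hfive : m.count 5 = m'.count 5 := by
    simpa [Finset.sum_Icc_succ_top] using valuation_eq Nat.prime_five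
  rw [sum_eq_of_mem_Icc_one_five hm, sum_eq_of_mem_Icc_one_five hm'] at hsum
  omega

lemma one_one_one_four_le_iff : {1, 1, 1, 4} ≤ m ↔ 3 ≤ m.count 1 ∧ 1 ≤ m.count 4 := by
  have hunion : ({1, 1, 1, 4} : Multiset ℕ) = .replicate 3 1 ∪ .replicate 1 4 := by decide
  rw [hunion, Multiset.union_le_iff, Multiset.le_count_iff_replicate_le,
    Multiset.le_count_iff_replicate_le]

lemma injOn_factorialProd_not_one_one_one_four_le (hS : S ⊆ Set.Icc 1 5) :
    Set.InjOn factorialProd {m ∈ multisetsWithSum S n | ¬ {1, 1, 1, 4} ≤ m} := by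
  rintro m ⟨⟨hmS, hsum⟩, hfree⟩ m' ⟨⟨hmS', hsum'⟩, hfree'⟩ hprod
  have hm : ∀ j ∈ m, j ∈ Finset.Icc 1 5 := fun j hj => Finset.mem_Icc.2 (hS (hmS j hj))
  have hm' : ∀ j ∈ m', j ∈ Finset.Icc 1 5 := fun j hj => Finset.mem_Icc.2 (hS (hmS' j hj))
  obtain ⟨hone, htwo, hthree, hfive⟩ :=
    count_sub_count_of_factorialProd_eq hm hm' (hsum.trans hsum'.symm) hprod
  rw [one_one_one_four_le_iff] at hfree hfree'
  have hfour : m.count 4 = m'.count 4 := by omega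
  ext j
  by_cases hj : j ∈ Finset.Icc 1 5
  · obtain ⟨hj_pos, hj_le⟩ := Finset.mem_Icc.1 hj
    interval_cases j <;> omega
  · rw [Multiset.count_eq_zero_of_notMem (mt (hm j) hj),
      Multiset.count_eq_zero_of_notMem (mt (hm' j) hj)]

lemma isShorteningExchange_one_one_one_four (hS : Set.Icc 1 4 ⊆ S) :
    IsShorteningExchange S {1, 1, 1, 4} {2, 2, 3} where
  mem_left j hj := hS (by revert j; decide)
  mem_right j hj := hS (by revert j; decide)
  sum_eq := rfl
  factorialProd_eq := rfl
  card_lt := by decide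

lemma zero_notMem_of_subset_Icc_one {b : ℕ} (hS : S ⊆ Set.Icc 1 b) : 0 ∉ S :=
  fun h => Nat.not_succ_le_zero 0 (hS h).1

lemma MS_eq_pS_sub_pS_of_seven_le (hS : Set.Icc 1 4 ⊆ S) (hS' : S ⊆ Set.Icc 1 5) (hn : 7 ≤ n) :
    (MS S n : ℤ) = (pS S n : ℤ) - (pS S (n - 7) : ℤ) := by
  obtain ⟨k, rfl⟩ := Nat.exists_eq_add_of_le hn
  have hadd : MS S (7 + k) + pS S k = pS S (7 + k) :=
    (isShorteningExchange_one_one_one_four hS).MS_add_pS_eq_pS (zero_notMem_of_subset_Icc_one hS') k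
      (injOn_factorialProd_not_one_one_one_four_le hS')
  rw [Nat.add_sub_cancel_left]
  omega

lemma MS_eq_pS_of_lt_seven (hS : Set.Icc 1 4 ⊆ S) (hS' : S ⊆ Set.Icc 1 5) (hn : n < 7) :
    MS S n = pS S n :=
  (isShorteningExchange_one_one_one_four hS).MS_eq_pS_of_lt_sum (zero_notMem_of_subset_Icc_one hS')
    hn (injOn_factorialProd_not_one_one_one_four_le hS')

end

/-- For `n ≥ 7`, `M_{[4]}(n) = p_{[4]}(n) − p_{[4]}(n−7)` and
`M_{[5]}(n) = p_{[5]}(n) − p_{[5]}(n−7)`; for `0 ≤ n < 7`,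
`M_{[4]}(n) = p_{[4]}(n)` and `M_{[5]}(n) = p_{[5]}(n)`. -/
theorem MS_four_five (n : ℕ) :
    (7 ≤ n →
      (MS (Set.Icc 1 4) n : ℤ)
        = (pS (Set.Icc 1 4) n : ℤ) - (pS (Set.Icc 1 4) (n - 7) : ℤ) ∧
      (MS (Set.Icc 1 5) n : ℤ)
        = (pS (Set.Icc 1 5) n : ℤ) - (pS (Set.Icc 1 5) (n - 7) : ℤ)) ∧
    (n < 7 →
      MS (Set.Icc 1 4) n = pS (Set.Icc 1 4) n ∧
      MS (Set.Icc 1 5) n = pS (Set.Icc 1 5) n) := by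
  have hIcc : Set.Icc 1 4 ⊆ Set.Icc 1 5 := Set.Icc_subset_Icc_right (Nat.le_succ 4)
  exact ⟨fun hn => ⟨MS_eq_pS_sub_pS_of_seven_le subset_rfl hIcc hn,
      MS_eq_pS_sub_pS_of_seven_le hIcc subset_rfl hn⟩,
    fun hn => ⟨MS_eq_pS_of_lt_seven subset_rfl hIcc hn, MS_eq_pS_of_lt_seven hIcc subset_rfl hn⟩⟩
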